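/- arXiv:math/0606401 — 2 statements merged into one kernel-verified Lean document; each statement's English description precedes it below -/
import Mathlib

section
/- Let n ≥ 1 and let S be a finite-dimensional real normed vector space equipped with linear operators β_a (a = 1,…,n) satisfying β_a β_b + β_b β_a = −δ_{ab}·id_S. For smooth ψ : ℝⁿ → S define Dψ = Σ_a β_a(∂_a ψ) and the twistor operator (Tψ)_a = ∂_a ψ + (2/n) β_a(Dψ). Then Σ_a ∂_a((Tψ)_a) = (2(n−1)/n)·D(Dψ); equivalently, with T*φ = −Σ_a ∂_a φ_a, one has −T*Tψ = (2(1−n)/n)·D²ψ. (Flat-space form of the key identity (4.15) in the proof of Proposition 4.7.) -/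
noncomputable section

/-- Points of `ℝⁿ`. -/
abbrev Vec (n : ℕ) := Fin n → ℝ

/-- Partial derivative `∂_a f` in the `a`-th coordinate direction. -/
def pd {n : ℕ} {S : Type*} [NormedAddCommGroup S] [NormedSpace ℝ S]
    (a : Fin n) (f : Vec n → S) (x : Vec n) : S :=
  fderiv ℝ f x (Pi.single a 1)

/-- The Dirac operator `Dψ = Σ_a β_a (∂_a ψ)` on `S`-valued maps. -/
def dirac {n : ℕ} {S : Type*} [NormedAddCommGroup S] [NormedSpace ℝ S]
    (β : Fin n → S →ₗ[ℝ] S) (ψ : Vec n → S) (x : Vec n) : S :=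
  ∑ a, β a (pd a ψ x)

theorem pd_clm {n : ℕ} {S : Type*} [NormedAddCommGroup S] [NormedSpace ℝ S]
    [FiniteDimensional ℝ S] (L : S →ₗ[ℝ] S) (a : Fin n) (f : Vec n → S) (x : Vec n)
    (hf : DifferentiableAt ℝ f x) :
    DifferentiableAt ℝ (fun y => L (f y)) x ∧ pd a (fun y => L (f y)) x = L (pd a f x) := by
  have h := (LinearMap.toContinuousLinearMap L).hasFDerivAt.comp x hf.hasFDerivAt
  have h' : HasFDerivAt (fun y => L (f y))
    ((LinearMap.toContinuousLinearMap L).comp (fderiv ℝ f x)) x := h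
  refine ⟨h'.differentiableAt, ?_⟩
  unfold pd
  rw [h'.fderiv]
  rfl

theorem pd_pd {n : ℕ} {S : Type*} [NormedAddCommGroup S] [NormedSpace ℝ S]
    (ψ : Vec n → S) (hψ : ContDiff ℝ (⊤ : ℕ∞) ψ) (a b : Fin n) (x : Vec n) :
    DifferentiableAt ℝ (pd b ψ) x ∧
    pd a (pd b ψ) x = fderiv ℝ (fderiv ℝ ψ) x (Pi.single a 1) (Pi.single b 1) := by
  have h1 : ContDiff ℝ 1 (fderiv ℝ ψ) := hψ.fderiv_right (by norm_cast)
  have h2 : DifferentiableAt ℝ (fderiv ℝ ψ) x := (h1.differentiable (by norm_num)) x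
  have h := h2.hasFDerivAt.clm_apply (hasFDerivAt_const (Pi.single b (1:ℝ) : Vec n) x)
  have h' : HasFDerivAt (pd b ψ) _ x := h
  refine ⟨h'.differentiableAt, ?_⟩
  unfold pd at h' ⊢
  rw [h'.fderiv]
  simp

theorem pd_comm {n : ℕ} {S : Type*} [NormedAddCommGroup S] [NormedSpace ℝ S]
    (ψ : Vec n → S) (hψ : ContDiff ℝ (⊤ : ℕ∞) ψ) (a b : Fin n) (x : Vec n) :
    pd a (pd b ψ) x = pd b (pd a ψ) x := by
  rw [(pd_pd ψ hψ a b x).2, (pd_pd ψ hψ b a x).2]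
  have h : IsSymmSndFDerivAt ℝ ψ x := by
    apply hψ.contDiffAt.isSymmSndFDerivAt
    simp only [minSmoothness_of_isRCLikeNormedField]
    norm_cast
  exact h _ _

/-- Flat-space form of the key identity (4.15) in the proof of Proposition 4.7:
with the twistor operator `(Tψ)_a = ∂_a ψ + (2/n) β_a(Dψ)` and
`T*φ = −Σ_a ∂_a φ_a`, one has `−T*Tψ = (2(1−n)/n)·D²ψ`, i.e.
`Σ_a ∂_a((Tψ)_a) = (2(1−n)/n)·D(Dψ)`. -/
theorem twistor_gradient_identity (n : ℕ) (hn : 1 ≤ n)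
    {S : Type*} [NormedAddCommGroup S] [NormedSpace ℝ S] [FiniteDimensional ℝ S]
    (β : Fin n → S →ₗ[ℝ] S)
    (hβ : ∀ a b, (β a) ∘ₗ (β b) + (β b) ∘ₗ (β a)
      = if a = b then -(LinearMap.id : S →ₗ[ℝ] S) else 0)
    (ψ : Vec n → S) (hψ : ContDiff ℝ (⊤ : ℕ∞) ψ)
    (Tψ : Fin n → Vec n → S)
    (hT : ∀ (a : Fin n) (y : Vec n),
      Tψ a y = pd a ψ y + ((2 : ℝ) / n) • β a (dirac β ψ y))
    (x : Vec n) :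
    ∑ a, pd a (Tψ a) x
      = ((2 * (1 - (n : ℝ))) / n) • dirac β (dirac β ψ) x := by
  have hn0 : (n : ℝ) ≠ 0 := by positivity
  have hD : ∀ a, DifferentiableAt ℝ (dirac β ψ) x ∧
      pd a (dirac β ψ) x = ∑ b, β b (pd a (pd b ψ) x) := by
    intro a
    have h : HasFDerivAt (dirac β ψ) (∑ b, fderiv ℝ (fun y => β b (pd b ψ y)) x) x := by
      have := HasFDerivAt.fun_sum (u := Finset.univ) (fun b _ =>
        (pd_clm (β b) a (pd b ψ) x (pd_pd ψ hψ a b x).1).1.hasFDerivAt)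
      exact this
    refine ⟨h.differentiableAt, ?_⟩
    have e : pd a (dirac β ψ) x = ∑ b, pd a (fun y => β b (pd b ψ y)) x := by
      unfold pd at h ⊢
      rw [h.fderiv, ContinuousLinearMap.sum_apply]
    rw [e]
    exact Finset.sum_congr rfl fun b _ => (pd_clm (β b) a (pd b ψ) x (pd_pd ψ hψ a b x).1).2
  have hTa : ∀ a, pd a (Tψ a) x = pd a (pd a ψ) x
      + ((2 : ℝ) / n) • β a (pd a (dirac β ψ) x) := by
    intro a
    have e : Tψ a = fun y => pd a ψ y + ((2 : ℝ) / n) • β a (dirac β ψ y) := funext (hT a)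
    obtain ⟨d, hd⟩ := pd_clm (β a) a (dirac β ψ) x (hD a).1
    have h := (pd_pd ψ hψ a a x).1.hasFDerivAt.fun_add (d.hasFDerivAt.fun_const_smul ((2 : ℝ) / n))
    rw [e, ← hd]
    unfold pd at h ⊢
    rw [h.fderiv]
    simp
  have hDD : dirac β (dirac β ψ) x = ∑ a, ∑ b, β a (β b (pd a (pd b ψ) x)) := by
    unfold dirac
    refine Finset.sum_congr rfl fun a _ => ?_
    have := (hD a).2
    unfold dirac at this
    rw [this, map_sum]
  have h2 : (2 : ℝ) • dirac β (dirac β ψ) x = - ∑ a, pd a (pd a ψ) x := by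
    rw [two_smul]
    nth_rewrite 2 [hDD]
    rw [Finset.sum_comm, hDD, ← Finset.sum_add_distrib, ← Finset.sum_neg_distrib]
    refine Finset.sum_congr rfl fun a _ => ?_
    rw [← Finset.sum_add_distrib, Finset.sum_eq_single a]
    · have := LinearMap.congr_fun (hβ a a) (pd a (pd a ψ) x)
      simpa using this
    · intro b _ hb
      have := LinearMap.congr_fun (hβ a b) (pd a (pd b ψ) x)
      rw [if_neg hb.symm] at this
      rw [pd_comm ψ hψ b a x]
      simpa using this
    · simp
  have hΔ : ∑ a, pd a (pd a ψ) x = (-2 : ℝ) • dirac β (dirac β ψ) x := by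
    rw [neg_smul, h2, neg_neg]
  rw [Finset.sum_congr rfl fun a _ => hTa a, Finset.sum_add_distrib, ← Finset.smul_sum, hΔ]
  change _ + ((2 : ℝ) / n) • dirac β (dirac β ψ) x = _
  rw [← add_smul]
  congr 1
  field_simp
  ring
end
end

section
/- Let n ≥ 3 and let S be a finite-dimensional real normed vector space equipped with linear operators β_a (a = 1,…,n) satisfying β_a β_b + β_b β_a = −δ_{ab}·id_S. For smooth ψ : ℝⁿ → S define Dψ = Σ_a β_a(∂_a ψ) and (Tψ)_a = ∂_a ψ + (2/n) β_a(Dψ). Then for each index a, (2/n)·∂_a(Dψ) = (2/(n−2))·( D((Tψ)_a) − (1/(n−1))·β_a Σ_b ∂_b((Tψ)_b) ), where D applied to the S-valued map (Tψ)_a means Σ_b β_b ∂_b((Tψ)_a). (Flat-space form of identity (4.14), which establishes the commutativity d^∇ L₀ = L₁ T of Proposition 4.7.) -/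
noncomputable section

/-- Flat-space form of identity (4.14), establishing the commutativity
`d^∇ L₀ = L₁ T` of Proposition 4.7: for the twistor operator
`(Tψ)_a = ∂_a ψ + (2/n) β_a(Dψ)`, one has
`(2/n) ∂_a(Dψ) = (2/(n−2)) ( D((Tψ)_a) − (1/(n−1)) β_a Σ_b ∂_b((Tψ)_b) )`. -/
theorem twistor_splitting_commutativity (n : ℕ) (hn : 3 ≤ n)
    {S : Type*} [NormedAddCommGroup S] [NormedSpace ℝ S] [FiniteDimensional ℝ S]
    (β : Fin n → S →ₗ[ℝ] S)
    (hβ : ∀ a b, (β a) ∘ₗ (β b) + (β b) ∘ₗ (β a)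
      = if a = b then -(LinearMap.id : S →ₗ[ℝ] S) else 0)
    (ψ : Vec n → S) (hψ : ContDiff ℝ (⊤ : ℕ∞) ψ)
    (Tψ : Fin n → Vec n → S)
    (hT : ∀ (a : Fin n) (y : Vec n),
      Tψ a y = pd a ψ y + ((2 : ℝ) / n) • β a (dirac β ψ y))
    (a : Fin n) (x : Vec n) :
    ((2 : ℝ) / n) • pd a (dirac β ψ) x
      = ((2 : ℝ) / ((n : ℝ) - 2)) •
          ((∑ b, β b (pd b (Tψ a) x))
            - ((1 : ℝ) / ((n : ℝ) - 1)) • β a (∑ b, pd b (Tψ b) x)) := by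
  have hn0 : (n : ℝ) ≠ 0 := by
    have : n ≠ 0 := by omega
    exact_mod_cast this
  have hn3 : (3 : ℝ) ≤ n := by exact_mod_cast hn
  have hn1 : (n : ℝ) - 1 ≠ 0 := by linarith
  have hn2 : (n : ℝ) - 2 ≠ 0 := by linarith
  have hac : ∀ a b (v : S), β a (β b v) + β b (β a v) = if a = b then -v else 0 := by
    intro a b v
    have h := LinearMap.congr_fun (hβ a b) v
    by_cases hab : a = b
    · simpa [hab] using h
    · simpa [hab] using h
  have hψ2 : ContDiff ℝ 2 ψ := by
    have := contDiff_infty.1 hψ 2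
    exact_mod_cast this
  have hd2 : Differentiable ℝ (fderiv ℝ ψ) :=
    (hψ2.fderiv_right (m := 1) (by norm_num)).differentiable (by norm_num)
  have hpd : ∀ b, Differentiable ℝ (pd b ψ) := fun b y =>
    (hd2 y).clm_apply (differentiableAt_const _)
  have hpdlin : ∀ (L : S →ₗ[ℝ] S) (f : Vec n → S) (_ : Differentiable ℝ f) (b : Fin n) (y : Vec n),
      DifferentiableAt ℝ (fun z => L (f z)) y ∧ pd b (fun z => L (f z)) y = L (pd b f y) := by
    intro L f hf b y
    have h := (LinearMap.toContinuousLinearMap L).hasFDerivAt.comp y (hf y).hasFDerivAt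
    have h' : HasFDerivAt (fun z => L (f z))
      ((LinearMap.toContinuousLinearMap L).comp (fderiv ℝ f y)) y := h
    refine ⟨h'.differentiableAt, ?_⟩
    unfold pd
    rw [h'.fderiv]
    rfl
  have hDd : Differentiable ℝ (dirac β ψ) := by
    intro y
    unfold dirac
    exact DifferentiableAt.fun_sum fun c _ => (hpdlin (β c) _ (hpd c) c y).1
  -- second derivatives
  obtain ⟨H, hH⟩ : ∃ H : Fin n → Fin n → S, ∀ b c, H b c = pd b (pd c ψ) x := ⟨_, fun _ _ => rfl⟩
  have hHsymm : ∀ b c, H b c = H c b := by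
    have key : ∀ b c, H b c = fderiv ℝ (fderiv ℝ ψ) x (Pi.single b 1) (Pi.single c 1) := by
      intro b c
      rw [hH]
      have h := (hd2 x).hasFDerivAt.clm_apply (hasFDerivAt_const (Pi.single c (1 : ℝ) : Vec n) x)
      unfold pd
      rw [h.fderiv]
      simp
    intro b c
    rw [key, key]
    have hs : IsSymmSndFDerivAt ℝ ψ x :=
      hψ2.contDiffAt.isSymmSndFDerivAt (by simp)
    exact hs _ _
  obtain ⟨E, hE⟩ : ∃ E : Fin n → S, ∀ b, E b = pd b (dirac β ψ) x := ⟨_, fun _ => rfl⟩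
  have hE' : ∀ b, E b = ∑ c, β c (H b c) := by
    intro b
    rw [hE]
    have h : fderiv ℝ (dirac β ψ) x = ∑ c, fderiv ℝ (fun z => β c (pd c ψ z)) x := by
      unfold dirac
      exact fderiv_fun_sum fun c _ => (hpdlin (β c) _ (hpd c) c x).1
    have h2 : pd b (dirac β ψ) x = ∑ c, pd b (fun z => β c (pd c ψ z)) x := by
      show fderiv ℝ (dirac β ψ) x _ = _
      rw [h, ContinuousLinearMap.sum_apply]
      rfl
    rw [h2]
    exact Finset.sum_congr rfl fun c _ => by rw [(hpdlin (β c) _ (hpd c) b x).2, hH]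
  have hTd : ∀ b c, pd b (Tψ c) x = H b c + ((2 : ℝ) / n) • β c (E b) := by
    intro b c
    have h0 : Tψ c = fun y => pd c ψ y + (((2 : ℝ) / n) • β c) (dirac β ψ y) := by
      funext y
      rw [hT]; rfl
    have h1 := hpdlin (((2 : ℝ) / n) • β c) _ hDd b x
    rw [h0, hH, hE]
    have h2 := h1.2
    rw [LinearMap.smul_apply] at h2
    rw [← h2]
    exact congrArg (fun L => L (Pi.single b 1)) (fderiv_fun_add (hpd c x) h1.1)
  obtain ⟨Δ, hΔ⟩ : ∃ Δ : S, Δ = ∑ b, H b b := ⟨_, rfl⟩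
  have hDD : ∑ b, β b (E b) = (-(1 / 2) : ℝ) • Δ := by
    have e1 : ∑ b, β b (E b) = ∑ b, ∑ c, β b (β c (H b c)) := by
      simp only [hE', map_sum]
    have e2 : ∑ b, β b (E b) = ∑ b, ∑ c, β c (β b (H b c)) := by
      rw [e1, Finset.sum_comm]
      exact Finset.sum_congr rfl fun b _ => Finset.sum_congr rfl fun c _ => by rw [hHsymm]
    have e3 : ∑ b, β b (E b) + ∑ b, β b (E b) = -Δ := by
      nth_rewrite 1 [e1]
      rw [e2, ← Finset.sum_add_distrib, hΔ]
      simp only [← Finset.sum_add_distrib, hac]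
      simp
    have e4 : ∑ b, β b (E b) = (1 / 2 : ℝ) • (∑ b, β b (E b) + ∑ b, β b (E b)) := by module
    rw [e4, e3]
    module
  have hBA : ∑ b, β b (β a (E b)) = -E a - β a (∑ b, β b (E b)) := by
    rw [map_sum, eq_sub_iff_add_eq, ← Finset.sum_add_distrib]
    simp only [hac]
    simp
  have hS1 : ∑ b, β b (pd b (Tψ a) x) = E a + ((2 : ℝ) / n) • ∑ b, β b (β a (E b)) := by
    simp only [hTd, map_add, map_smul, Finset.sum_add_distrib, ← Finset.smul_sum]
    rw [hE' a]
    congr 1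
    exact Finset.sum_congr rfl fun b _ => by rw [hHsymm]
  have hS2 : ∑ b, pd b (Tψ b) x = Δ + ((2 : ℝ) / n) • ∑ b, β b (E b) := by
    simp only [hTd, Finset.sum_add_distrib, ← Finset.smul_sum, hΔ]
  rw [hS1, hS2, hBA, hDD, ← hE]
  simp only [map_add, map_smul]
  match_scalars <;> field_simp <;> ring
end
end
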